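/- For the Poisson regression example, for every α ∈ (0,1] and every ε > 0 one has liminf_{θ→∞} [ 𝓛_{α,ε}(θ)·G_α(θ) / ( F(θ) + |F'(θ)|² ) ] = ∞, where G_α(θ) := E[|∂_θ f(θ,Z)|^{1+α}] and 𝓛_{α,ε}(θ) is the smallest constant L ∈ (0,∞) such that |F'(θ) − F'(θ')| ≤ L·|θ − θ'|^α for all θ' with |θ' − θ| ≤ (max(G_α(θ), ε))^{1/(1+α)}. (Consequently, Assumption 5 of Patel and Berahas (2022) used to establish the convergence of stochastic gradient fails for every α ∈ (0,1].) -/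

import Mathlib

open MeasureTheory ProbabilityTheory Real Filter

/-!
Once the radius is at least `1`, the unit step from `θ` to `θ + 1` forces the local Hölder constant
of `F'` at `θ` to be at least `F' (θ + 1) - F' θ`. The main term of this increment is
`exp (exp 1 * exp θ + θ)`, while `F θ + |F' θ| ^ 2` is at most `2 * exp (2 * (exp θ + θ - 1))`;
since `2 < exp 1`, the increment wins. The moment `G θ`, and with it the radius, is at least `1` for
`2 ≤ θ` because of the single outcome `(X, Y) = (1, 0)`: its probability is `exp (-2)`, and the
derivative of the loss there is `exp θ`.
-/

section Holder

open scoped NNReal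

variable {E E' : Type*} [PseudoMetricSpace E] [PseudoMetricSpace E'] {f : E → E'}
  {α r : ℝ} {x y : E}

/-- The smallest Hölder constant of exponent `α` of `f` at the centre `x` of the closed ball of
radius `r`: only pairs containing `x` are compared. It is `0` when no constant exists. -/
noncomputable def localHolderConst (f : E → E') (α r : ℝ) (x : E) : ℝ :=
  sInf {l : ℝ | 0 < l ∧ ∀ y, dist y x ≤ r → dist (f x) (f y) ≤ l * dist x y ^ α}

theorem localHolderConst_nonneg : 0 ≤ localHolderConst f α r x :=
  Real.sInf_nonneg fun _ hl => hl.1.le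

theorem exists_pos_dist_le_mul_rpow_of_locallyLipschitz [ProperSpace E] (hf : LocallyLipschitz f)
    (hα : α ∈ Set.Icc (0 : ℝ) 1) (r : ℝ) (x : E) :
    ∃ l : ℝ, 0 < l ∧ ∀ y, dist y x ≤ r → dist (f x) (f y) ≤ l * dist x y ^ α := by
  lift α to ℝ≥0 using hα.1
  obtain ⟨K, hK⟩ := (hf.locallyLipschitzOn (s := Metric.closedBall x r))
    |>.exists_lipschitzOnWith_of_compact (isCompact_closedBall x r)
  obtain ⟨D, hD⟩ := Metric.isBounded_iff_nndist.1 (Metric.isBounded_closedBall (x := x) (r := r))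
  obtain ⟨C, hC⟩ : ∃ C : ℝ≥0, HolderOnWith C α f (Metric.closedBall x r) :=
    ⟨_, (holderOnWith_one.2 hK).of_le
      (fun y hy z hz => by rw [edist_nndist]; exact_mod_cast hD hy hz) (by exact_mod_cast hα.2)⟩
  refine ⟨C + 1, by positivity, fun y hy => ?_⟩
  have hx : x ∈ Metric.closedBall x r := Metric.mem_closedBall_self (dist_nonneg.trans hy)
  exact (hC.dist_le hx hy).trans (by gcongr; exact le_add_of_nonneg_right zero_le_one)

theorem dist_le_localHolderConst_mul_rpow [ProperSpace E] (hf : LocallyLipschitz f)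
    (hα : α ∈ Set.Icc (0 : ℝ) 1) (hy : dist y x ≤ r) :
    dist (f x) (f y) ≤ localHolderConst f α r x * dist x y ^ α := by
  have hne := exists_pos_dist_le_mul_rpow_of_locallyLipschitz hf hα r x
  rcases (rpow_nonneg (dist_nonneg (x := x) (y := y)) α).eq_or_lt with hzero | hpos
  · obtain ⟨l, -, hl⟩ := hne
    simpa only [← hzero, mul_zero] using hl y hy
  · rw [← div_le_iff₀ hpos]
    exact le_csInf hne fun l hl => (div_le_iff₀ hpos).2 (hl.2 y hy)

end Holder

section Moment

open scoped NNReal Nat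

theorem hasLaw_poissonMeasure {Ω : Type*} [MeasurableSpace Ω] {μ : Measure Ω} {X : Ω → ℕ} {r : ℝ≥0}
    (hX : Measurable X)
    (hpmf : ∀ k : ℕ, μ {ω | X ω = k} = ENNReal.ofReal (exp (-r) * r ^ k / k !)) :
    HasLaw X (poissonMeasure r) μ where
  map_eq := Measure.ext_of_singleton fun k => by
    rw [Measure.map_apply hX (measurableSet_singleton k), poissonMeasure_singleton]
    exact hpmf k

theorem integrable_exp_mul_poissonMeasure (r : ℝ≥0) (t : ℝ) :
    Integrable (fun n : ℕ => exp (t * n)) (poissonMeasure r) := by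
  rw [integrable_poissonMeasure_iff]
  refine ((Real.summable_pow_div_factorial (r * exp t)).mul_left (exp (-r))).congr fun n => ?_
  rw [Real.norm_of_nonneg (exp_pos _).le, mul_comm t, exp_nat_mul, mul_pow]
  ring

/-- The derivative in `θ` of the Poisson regression loss `-y * x * θ + exp (θ * x)` at the data
point `(x, y) = (m, n)`. -/
noncomputable def poissonLossDeriv (θ : ℝ) (m n : ℕ) : ℝ :=
  -(m : ℝ) * n + m * exp (θ * m)

theorem abs_poissonLossDeriv_le (θ : ℝ) (m n : ℕ) :
    |poissonLossDeriv θ m n| ≤ exp ((1 + |θ|) * m) * exp n := by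
  have le_exp (k : ℕ) : (k : ℝ) ≤ exp k := by linarith [add_one_le_exp (k : ℝ)]
  have hθ : exp (θ * m) ≤ exp (|θ| * m) := by gcongr; exact le_abs_self θ
  have hfactor : |exp (θ * m) - n| ≤ exp (|θ| * m) * exp n :=
    abs_sub_le_of_nonneg_of_le (exp_pos _).le
      (hθ.trans (le_mul_of_one_le_right (exp_pos _).le (one_le_exp n.cast_nonneg)))
      n.cast_nonneg
      ((le_exp n).trans (le_mul_of_one_le_left (exp_pos _).le (one_le_exp (by positivity))))
  calc |poissonLossDeriv θ m n| = m * |exp (θ * m) - n| := by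
        rw [← Nat.abs_cast m, ← abs_mul, Nat.abs_cast, poissonLossDeriv]; ring_nf
    _ ≤ exp m * (exp (|θ| * m) * exp n) := by gcongr; exact le_exp m
    _ = exp ((1 + |θ|) * m) * exp n := by rw [← mul_assoc, ← exp_add]; ring_nf

theorem integrable_abs_poissonLossDeriv_rpow (r s : ℝ≥0) (θ : ℝ) {p : ℝ} (hp : 0 ≤ p) :
    Integrable (fun z : ℕ × ℕ => |poissonLossDeriv θ z.1 z.2| ^ p)
      ((poissonMeasure r).prod (poissonMeasure s)) := by
  refine ((integrable_exp_mul_poissonMeasure r ((1 + |θ|) * p)).mul_prod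
    (integrable_exp_mul_poissonMeasure s p)).mono' .of_discrete (.of_forall fun z => ?_)
  calc ‖|poissonLossDeriv θ z.1 z.2| ^ p‖ = |poissonLossDeriv θ z.1 z.2| ^ p :=
        Real.norm_of_nonneg (by positivity)
    _ ≤ (exp ((1 + |θ|) * z.1) * exp z.2) ^ p := by gcongr; exact abs_poissonLossDeriv_le θ z.1 z.2
    _ = exp ((1 + |θ|) * p * z.1) * exp (p * z.2) := by
        rw [← exp_add, ← exp_mul, ← exp_add]; ring_nf

theorem le_integral_abs_poissonLossDeriv_rpow (r s : ℝ≥0) (θ : ℝ) {p : ℝ} (hp : 0 ≤ p) :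
    r * exp (θ * p - r - s) ≤ ∫ z, |poissonLossDeriv θ z.1 z.2| ^ p
      ∂(poissonMeasure r).prod (poissonMeasure s) := by
  have hmass : ((poissonMeasure r).prod (poissonMeasure s)).real {((1 : ℕ), (0 : ℕ))} =
      r * exp (-r) * exp (-s) := by
    rw [← Set.singleton_prod_singleton, measureReal_prod_prod, poissonMeasure_real_singleton,
      poissonMeasure_real_singleton]
    simp [mul_comm]
  calc r * exp (θ * p - r - s)
      = ∫ z in {((1 : ℕ), (0 : ℕ))}, |poissonLossDeriv θ z.1 z.2| ^ p
          ∂(poissonMeasure r).prod (poissonMeasure s) := by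
        rw [integral_singleton, hmass, sub_eq_add_neg, sub_eq_add_neg, exp_add, exp_add, exp_mul]
        simp only [poissonLossDeriv, Nat.cast_one, Nat.cast_zero, mul_zero, zero_add, one_mul,
          mul_one, abs_exp, smul_eq_mul]
        ring
    _ ≤ _ := setIntegral_le_integral (integrable_abs_poissonLossDeriv_rpow r s θ hp)
        (.of_forall fun z => by positivity)

theorem one_le_integral_abs_poissonLossDeriv_rpow {θ p : ℝ} (hθ : 2 ≤ θ) (hp : 1 ≤ p) :
    1 ≤ ∫ z, |poissonLossDeriv θ z.1 z.2| ^ p ∂(poissonMeasure 1).prod (poissonMeasure 1) :=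
  calc (1 : ℝ) ≤ (1 : ℝ≥0) * exp (θ * p - (1 : ℝ≥0) - (1 : ℝ≥0)) := by
        rw [NNReal.coe_one, one_mul]
        exact one_le_exp (by nlinarith)
    _ ≤ _ := le_integral_abs_poissonLossDeriv_rpow 1 1 θ (zero_le_one.trans hp)

end Moment

section Growth

variable {θ : ℝ}

/-- The objective `F` of Poisson regression: the expected loss for independent covariate and
response of mean `1`, in closed form. -/
noncomputable def poissonObjective (θ : ℝ) : ℝ := -θ + exp (exp θ - 1)

/-- The derivative `F'` of `poissonObjective`, in closed form. -/
noncomputable def poissonObjectiveDeriv (θ : ℝ) : ℝ := -1 + exp (exp θ + θ - 1)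

theorem locallyLipschitz_poissonObjectiveDeriv : LocallyLipschitz poissonObjectiveDeriv :=
  ContDiff.locallyLipschitz (𝕂 := ℝ) (by unfold poissonObjectiveDeriv; fun_prop)

theorem poissonObjectiveDeriv_sub_le_localHolderConst {α r : ℝ} (hα : α ∈ Set.Icc (0 : ℝ) 1)
    (hr : 1 ≤ r) (θ : ℝ) :
    poissonObjectiveDeriv (θ + 1) - poissonObjectiveDeriv θ ≤
      localHolderConst poissonObjectiveDeriv α r θ :=
  calc poissonObjectiveDeriv (θ + 1) - poissonObjectiveDeriv θ
      ≤ dist (poissonObjectiveDeriv θ) (poissonObjectiveDeriv (θ + 1)) := by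
        rw [dist_comm]; exact le_abs_self _
    _ ≤ localHolderConst poissonObjectiveDeriv α r θ * dist θ (θ + 1) ^ α :=
        dist_le_localHolderConst_mul_rpow locallyLipschitz_poissonObjectiveDeriv hα (by simpa)
    _ = localHolderConst poissonObjectiveDeriv α r θ := by simp

theorem poissonObjective_pos (θ : ℝ) : 0 < poissonObjective θ := by
  unfold poissonObjective
  linarith [add_one_le_exp θ, add_one_le_exp (exp θ - 1)]

theorem poissonObjective_add_sq_le (hθ : 0 ≤ θ) :
    poissonObjective θ + |poissonObjectiveDeriv θ| ^ 2 ≤ 2 * exp (2 * (exp θ + θ - 1)) := by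
  have hexp : 1 ≤ exp θ := one_le_exp hθ
  have hobj : poissonObjective θ ≤ exp (2 * (exp θ + θ - 1)) := by
    have : exp (exp θ - 1) ≤ exp (2 * (exp θ + θ - 1)) := by gcongr; linarith
    unfold poissonObjective
    linarith
  have hderiv : |poissonObjectiveDeriv θ| ^ 2 ≤ exp (2 * (exp θ + θ - 1)) := by
    have : 1 ≤ exp (exp θ + θ - 1) := one_le_exp (by linarith)
    calc |poissonObjectiveDeriv θ| ^ 2 ≤ exp (exp θ + θ - 1) ^ 2 := by
          gcongr
          rw [poissonObjectiveDeriv, abs_of_nonneg] <;> linarith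
      _ = exp (2 * (exp θ + θ - 1)) := by rw [← exp_nat_mul, Nat.cast_ofNat]
  linarith

theorem two_mul_exp_add_le_exp_add_one (hθ : 0 ≤ θ) : 2 * exp θ + (2 * θ - 1) ≤ exp (θ + 1) := by
  have hquad : 1 + θ + θ ^ 2 / 2 ≤ exp θ := quadratic_le_exp_of_nonneg hθ
  have he : 0.7 ≤ exp 1 - 2 := by linarith [exp_one_gt_d9]
  have hexcess : 2 * θ - 1 ≤ (exp 1 - 2) * exp θ :=
    calc 2 * θ - 1 ≤ 0.7 * (1 + θ + θ ^ 2 / 2) := by nlinarith [sq_nonneg (θ - 2)]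
      _ ≤ (exp 1 - 2) * exp θ := by gcongr
  rw [exp_add]
  linarith

theorem mul_exp_le_poissonObjectiveDeriv_sub (hθ : 0 ≤ θ) :
    (θ + 1) * exp (2 * (exp θ + θ - 1)) ≤
      poissonObjectiveDeriv (θ + 1) - poissonObjectiveDeriv θ := by
  set u := exp θ + θ - 1 with hu
  have hu_nonneg : 0 ≤ u := by linarith [one_le_exp hθ]
  have hgrow : exp (θ + 1) * exp (2 * u) ≤ exp (exp (θ + 1) + (θ + 1) - 1) := by
    rw [← exp_add]
    gcongr
    linarith [two_mul_exp_add_le_exp_add_one hθ]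
  calc (θ + 1) * exp (2 * u) ≤ (exp (θ + 1) - 1) * exp (2 * u) := by
        gcongr; linarith [add_one_le_exp (θ + 1)]
    _ = exp (θ + 1) * exp (2 * u) - exp (2 * u) := by ring
    _ ≤ exp (exp (θ + 1) + (θ + 1) - 1) - exp u := by gcongr; linarith
    _ = poissonObjectiveDeriv (θ + 1) - poissonObjectiveDeriv θ := by
        simp only [poissonObjectiveDeriv, hu]; ring

theorem mul_poissonObjective_add_sq_le (hθ : 0 ≤ θ) :
    (θ + 1) / 2 * (poissonObjective θ + |poissonObjectiveDeriv θ| ^ 2) ≤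
      poissonObjectiveDeriv (θ + 1) - poissonObjectiveDeriv θ :=
  calc _ ≤ (θ + 1) / 2 * (2 * exp (2 * (exp θ + θ - 1))) := by
        gcongr; exact poissonObjective_add_sq_le hθ
    _ = (θ + 1) * exp (2 * (exp θ + θ - 1)) := by ring
    _ ≤ _ := mul_exp_le_poissonObjectiveDeriv_sub hθ

end Growth

/-- For the Poisson regression example (X, Y independent Poisson(1),
∂_θ f(θ,(x,y)) = −x·y + x·exp(θ·x), F(θ) = −θ + exp(exp(θ)−1),
F'(θ) = −1 + exp(exp(θ)+θ−1)): for every α ∈ (0,1] and every ε > 0,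
liminf_{θ→∞} 𝓛_{α,ε}(θ)·G_α(θ) / (F(θ) + |F'(θ)|²) = ∞, where
G_α(θ) := E[|∂_θ f(θ,Z)|^{1+α}] and 𝓛_{α,ε}(θ) is the smallest constant L ∈ (0,∞) such
that |F'(θ) − F'(θ')| ≤ L·|θ−θ'|^α for all θ' with |θ'−θ| ≤ (max(G_α(θ),ε))^{1/(1+α)}.
(Equivalently, the ratio tends to +∞ as θ → ∞.) -/
theorem stmt3
    {Ω : Type*} [MeasureSpace Ω] [IsProbabilityMeasure (ℙ : Measure Ω)]
    (X Y : Ω → ℕ) (hXm : Measurable X) (hYm : Measurable Y)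
    (hindep : IndepFun X Y ℙ)
    (hX : ∀ k : ℕ, ℙ {ω | X ω = k} = ENNReal.ofReal (Real.exp (-1) / (Nat.factorial k)))
    (hY : ∀ k : ℕ, ℙ {ω | Y ω = k} = ENNReal.ofReal (Real.exp (-1) / (Nat.factorial k)))
    (F F' : ℝ → ℝ)
    (hF : ∀ θ : ℝ, F θ = -θ + Real.exp (Real.exp θ - 1))
    (hF' : ∀ θ : ℝ, F' θ = -1 + Real.exp (Real.exp θ + θ - 1))
    (α : ℝ) (hα : α ∈ Set.Ioc (0 : ℝ) 1) (ε : ℝ) (hε : 0 < ε)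
    (G : ℝ → ℝ)
    (hG : ∀ θ : ℝ,
      G θ = ∫ ω, |(-(X ω : ℝ) * (Y ω : ℝ) + (X ω : ℝ) * Real.exp (θ * (X ω : ℝ)))| ^ (1 + α) ∂ℙ)
    (L : ℝ → ℝ)
    (hL : ∀ θ : ℝ,
      L θ = sInf {l : ℝ | 0 < l ∧ ∀ θ' : ℝ, |θ' - θ| ≤ (max (G θ) ε) ^ ((1 : ℝ) / (1 + α)) →
        |F' θ - F' θ'| ≤ l * |θ - θ'| ^ α}) :
    Tendsto (fun θ : ℝ => L θ * G θ / (F θ + |F' θ| ^ 2)) atTop atTop := by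
  obtain rfl : F = poissonObjective := funext hF
  obtain rfl : F' = poissonObjectiveDeriv := funext hF'
  have hlaw : HasLaw (fun ω => (X ω, Y ω)) ((poissonMeasure 1).prod (poissonMeasure 1)) ℙ :=
    hindep.hasLaw_prod (hasLaw_poissonMeasure hXm (by simpa using hX))
      (hasLaw_poissonMeasure hYm (by simpa using hY))
  refine tendsto_atTop_mono' atTop ?_
    ((tendsto_atTop_add_const_right atTop (1 : ℝ) tendsto_id).atTop_div_const two_pos)
  filter_upwards [eventually_ge_atTop 2] with θ hθ
  have hmoment : 1 ≤ G θ :=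
    (one_le_integral_abs_poissonLossDeriv_rpow hθ (by linarith [hα.1])).trans_eq
      ((hlaw.integral_comp .of_discrete).symm.trans (hG θ).symm)
  have hradius : 1 ≤ (max (G θ) ε) ^ ((1 : ℝ) / (1 + α)) :=
    one_le_rpow (hmoment.trans (le_max_left _ _)) (by have := hα.1; positivity)
  have hLθ : L θ = localHolderConst poissonObjectiveDeriv α _ θ := hL θ
  have hincrement : poissonObjectiveDeriv (θ + 1) - poissonObjectiveDeriv θ ≤ L θ :=
    (poissonObjectiveDeriv_sub_le_localHolderConst (Set.Ioc_subset_Icc_self hα) hradius θ).trans_eq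
      hLθ.symm
  have hL_nonneg : 0 ≤ L θ := hLθ ▸ localHolderConst_nonneg
  rw [id, le_div_iff₀ (add_pos_of_pos_of_nonneg (poissonObjective_pos θ) (sq_nonneg _))]
  exact (mul_poissonObjective_add_sq_le (by linarith)).trans
    (hincrement.trans (le_mul_of_one_le_right hL_nonneg hmoment))
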